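/- Let r ≥ 1, n ≥ 1, and 1 ≤ k ≤ n. For each j with 1 ≤ j ≤ rn+1, the number of paths p in 𝒫(n,r,1) with p_1 = +1 that have exactly k peaks and exactly j up steps starting on or below the x-axis equals (1/(rn+1))·C(rn+1,k)·C(n−1,k−1). -/

import Mathlib

open Finset

/-- The sum of the first `m` entries of a sequence `p` of length `N` (the height `s_m`). -/
def psum {N : ℕ} (p : Fin N → ℤ) (m : ℕ) : ℤ :=
  ∑ j ∈ Finset.univ.filter (fun j : Fin N => (j : ℕ) < m), p j

/-!
Encode a path as a word of up and down letters and rotate it cyclically. Rotations preserve the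
number of up steps and the number of cyclic peaks, and the latter is the number of peaks when the
word begins with an up step. Since the total height is `1`, starting the word at position `s` makes
the step at position `t` begin on or below the axis exactly when `t` does not come after `s` in the
order that compares heights and, at equal heights, puts later positions first. Hence among the
`rn + 1` rotations beginning with an up step each `j ∈ {1, …, rn + 1}` occurs exactly once, so the
paths are equidistributed over `j`. It remains to count all words beginning with an up step and
having `k` peaks, by recursion on the first letter.
-/

namespace ChungFeller

theorem card_mul_card_filter_of_perm {ι X : Type*} [Fintype ι] (e : ι → Equiv.Perm X)
    (S : Finset X) (hS : ∀ i x, e i x ∈ S ↔ x ∈ S) (P : X → Prop) [DecidablePred P] :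
    Fintype.card ι * #{x ∈ S | P x} = ∑ x ∈ S, #{i | P (e i x)} := by
  have hcard (i : ι) : #{x ∈ S | P (e i x)} = #{x ∈ S | P x} :=
    card_equiv (e i) fun x => by simp only [mem_filter, hS]
  calc Fintype.card ι * #{x ∈ S | P x} = ∑ i : ι, #{x ∈ S | P (e i x)} := by
        simp only [hcard, sum_const, card_univ, smul_eq_mul]
    _ = ∑ x ∈ S, #{i | P (e i x)} :=
        sum_card_bipartiteAbove_eq_sum_card_bipartiteBelow fun i x => P (e i x)

theorem card_filter_rank_eq_one {α β : Type*} [LinearOrder β] {A : Finset α} {f : α → β}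
    (hf : Set.InjOn f A) {j : ℕ} (hj1 : 1 ≤ j) (hj2 : j ≤ #A) :
    #{s ∈ A | #{t ∈ A | f t ≤ f s} = j} = 1 := by
  have rank_lt {a b : α} (hb : b ∈ A) (hab : f a < f b) :
      #{t ∈ A | f t ≤ f a} < #{t ∈ A | f t ≤ f b} := by
    refine card_lt_card ((ssubset_iff_of_subset ?_).2 ⟨b, by simp [hb], by simp [hab]⟩)
    exact monotone_filter_right A fun t _ ht => ht.trans hab.le
  have rank_injOn : Set.InjOn (fun s => #{t ∈ A | f t ≤ f s}) A := by
    intro a ha b hb hab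
    by_contra hne
    rcases lt_or_gt_of_ne (hf.ne ha hb hne) with h | h
    · exact (rank_lt hb h).ne hab
    · exact (rank_lt ha h).ne' hab
  have rank_mapsTo : Set.MapsTo (fun s => #{t ∈ A | f t ≤ f s}) A (Icc 1 #A) := fun s hs =>
    mem_Icc.2 ⟨card_pos.2 ⟨s, by simpa using hs⟩, card_filter_le _ _⟩
  obtain ⟨s, hs, hsj⟩ :=
    surjOn_of_injOn_of_card_le _ rank_mapsTo rank_injOn (by simp) (mem_Icc.2 ⟨hj1, hj2⟩)
  refine card_eq_one_iff_existsUnique.2 ⟨s, mem_filter.2 ⟨hs, hsj⟩, fun t ht => ?_⟩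
  obtain ⟨htA, htj⟩ := mem_filter.1 ht
  exact rank_injOn htA hs (htj.trans hsj.symm)

theorem card_two_letter_sequences {ι α : Type*} [Fintype ι] [DecidableEq ι] {x y : α}
    (hxy : x ≠ y) (P : (ι → α) → Prop) [DecidablePred P] :
    Nat.card {p : ι → α // (∀ i, p i = x ∨ p i = y) ∧ P p} =
      #{w : ι → Bool | P fun i => if w i then x else y} := by
  classical
  have h_decode {p : ι → α} (hp : ∀ i, p i = x ∨ p i = y) :
      (fun i => if decide (p i = x) then x else y) = p := by
    funext i
    rcases hp i with h | h <;> simp [h, hxy.symm]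
  have h_encode (w : ι → Bool) : (fun i => decide ((if w i then x else y) = x)) = w := by
    funext i
    cases w i <;> simp [hxy.symm]
  let e : {p : ι → α // (∀ i, p i = x ∨ p i = y) ∧ P p} ≃
      {w : ι → Bool // P fun i => if w i then x else y} :=
    { toFun p := ⟨fun i => decide (p.1 i = x), by rw [h_decode p.2.1]; exact p.2.2⟩
      invFun w := ⟨fun i => if w.1 i then x else y, fun i => ite_eq_or_eq .., w.2⟩
      left_inv p := Subtype.ext (h_decode p.2.1)
      right_inv w := Subtype.ext (h_encode w.1) }
  exact (Nat.card_congr e).trans (Nat.subtype_card _ fun _ => mem_filter_univ _)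

section Rotation

variable {m : ℕ}

/-- The cyclic rotation of sequences indexed by `Fin (m + 1)` that moves position `s` to the front;
addition in `Fin (m + 1)` is modulo `m + 1`. -/
def rotate {α : Type*} (s : Fin (m + 1)) : Equiv.Perm (Fin (m + 1) → α) :=
  (Equiv.addRight s).symm.arrowCongr (Equiv.refl α)

theorem rotate_apply {α : Type*} (s i : Fin (m + 1)) (w : Fin (m + 1) → α) :
    rotate s w i = w (i + s) :=
  rfl

theorem psum_eq_sum_range (p : Fin (m + 1) → ℤ) {t : ℕ} (ht : t ≤ m + 1) :
    psum p t = ∑ i ∈ range t, p (Fin.ofNat (m + 1) i) := by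
  have h_range : {i ∈ range (m + 1) | i < t} = range t := by
    ext i
    simp only [mem_filter, mem_range]
    omega
  have h_sum := Fin.sum_univ_eq_sum_range
    (fun i => if i < t then p (Fin.ofNat (m + 1) i) else 0) (m + 1)
  rw [← sum_filter, ← sum_filter, h_range] at h_sum
  simpa [psum] using h_sum

theorem sum_range_ofNat_add_period {M : Type*} [AddCommMonoid M] (p : Fin (m + 1) → M) (t : ℕ) :
    ∑ i ∈ range (t + (m + 1)), p (Fin.ofNat (m + 1) i) =
      ∑ i ∈ range t, p (Fin.ofNat (m + 1) i) + ∑ i, p i := by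
  have h_period : ∑ i ∈ range (m + 1), p (Fin.ofNat (m + 1) i) = ∑ i, p i := by
    rw [← Fin.sum_univ_eq_sum_range fun i => p (Fin.ofNat (m + 1) i)]
    simp
  rw [add_comm t, sum_range_add, h_period, add_comm]
  simp [Fin.ofNat]

theorem psum_rotate (p : Fin (m + 1) → ℤ) (s i : Fin (m + 1)) :
    psum (rotate s p) i =
      psum p (i + s : Fin (m + 1)) - psum p s + if i + s < s then ∑ t, p t else 0 := by
  have h_rotate : psum (rotate s p) i + psum p s =
      ∑ t ∈ range (s + i), p (Fin.ofNat (m + 1) t) := by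
    rw [psum_eq_sum_range _ i.2.le, psum_eq_sum_range _ s.2.le, sum_range_add, add_comm]
    congr 1
    refine sum_congr rfl fun t _ => congrArg p ?_
    ext
    simp [Fin.val_add, add_comm]
  rw [eq_sub_of_add_eq h_rotate, psum_eq_sum_range _ (i + s).2.le]
  by_cases h : (i : ℕ) + s < m + 1
  · have h_val : ((i + s : Fin (m + 1)) : ℕ) = s + i := by
      rw [Fin.val_add, Nat.mod_eq_of_lt h, add_comm]
    rw [h_val, if_neg (by rw [Fin.lt_def]; omega), add_zero]
  · have h_val : ((i + s : Fin (m + 1)) : ℕ) + (m + 1) = s + i := by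
      rw [Fin.val_add, Nat.mod_eq_sub_mod (by omega), Nat.mod_eq_of_lt (by omega)]
      omega
    rw [← h_val, sum_range_ofNat_add_period, if_pos (by rw [Fin.lt_def]; omega)]
    ring

/-- The key by which positions of `p` are compared: the height at which the step starts, where
among equal heights the later position is the smaller one. -/
def startKey (p : Fin (m + 1) → ℤ) (t : Fin (m + 1)) : ℤ ×ₗ (Fin (m + 1))ᵒᵈ :=
  toLex (psum p t, OrderDual.toDual t)

theorem startKey_injective (p : Fin (m + 1) → ℤ) : Function.Injective (startKey p) :=
  fun _ _ h => OrderDual.toDual.injective (congrArg Prod.snd (toLex.injective h))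

theorem psum_rotate_nonpos_iff {p : Fin (m + 1) → ℤ} (hp : ∑ i, p i = 1) (s i : Fin (m + 1)) :
    psum (rotate s p) i ≤ 0 ↔ startKey p (i + s) ≤ startKey p s := by
  rw [psum_rotate, hp, startKey, startKey, Prod.Lex.toLex_le_toLex, OrderDual.toDual_le_toDual,
    ← not_lt]
  generalize psum p (i + s : Fin (m + 1)) = height
  split_ifs <;> omega

theorem card_nonpos_rotate {p : Fin (m + 1) → ℤ} (hp : ∑ i, p i = 1) (A : Finset (Fin (m + 1)))
    (s : Fin (m + 1)) :
    #{i : Fin (m + 1) | i + s ∈ A ∧ psum (rotate s p) i ≤ 0} =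
      #{t ∈ A | startKey p t ≤ startKey p s} :=
  card_equiv (Equiv.addRight s) fun i => by simp [psum_rotate_nonpos_iff hp]

theorem card_rotations_with_nonpos_eq_one {p : Fin (m + 1) → ℤ} (hp : ∑ i, p i = 1)
    {A : Finset (Fin (m + 1))} {j : ℕ} (hj1 : 1 ≤ j) (hj2 : j ≤ #A) :
    #{s ∈ A | #{i : Fin (m + 1) | i + s ∈ A ∧ psum (rotate s p) i ≤ 0} = j} = 1 := by
  simp only [card_nonpos_rotate hp]
  exact card_filter_rank_eq_one (startKey_injective p).injOn hj1 hj2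

theorem card_filter_nonpos_mul_eq_card_filter {α : Type*} (val : α → ℤ) (Q : α → Prop)
    [DecidablePred Q] {S : Finset (Fin (m + 1) → α)} (hS : ∀ s w, rotate s w ∈ S ↔ w ∈ S)
    (hsum : ∀ w ∈ S, ∑ i, val (w i) = 1) {M : ℕ} (hM : ∀ w ∈ S, #{i | Q (w i)} = M)
    {j : ℕ} (hj1 : 1 ≤ j) (hj2 : j ≤ M) :
    #{w ∈ S | Q (w 0) ∧ #{i : Fin (m + 1) | Q (w i) ∧ psum (fun i => val (w i)) i ≤ 0} = j} * M =
      #{w ∈ S | Q (w 0)} := by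
  have h_one {w : Fin (m + 1) → α} (hw : w ∈ S) :
      #{s | Q (rotate s w 0) ∧
        #{i : Fin (m + 1) | Q (rotate s w i) ∧
          psum (fun i => val (rotate s w i)) i ≤ 0} = j} = 1 := by
    have h := card_rotations_with_nonpos_eq_one (A := {i | Q (w i)}) (hsum w hw) hj1
      (hj2.trans (hM w hw).ge)
    rw [filter_filter] at h
    simp only [mem_filter_univ] at h
    simp only [rotate_apply, zero_add]
    exact h
  have h_all {w : Fin (m + 1) → α} (hw : w ∈ S) : #{s | Q (rotate s w 0)} = M := by
    simp only [rotate_apply, zero_add, hM w hw]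
  have h_nonpos := card_mul_card_filter_of_perm rotate S hS fun w =>
    Q (w 0) ∧ #{i : Fin (m + 1) | Q (w i) ∧ psum (fun i => val (w i)) i ≤ 0} = j
  have h_first := card_mul_card_filter_of_perm rotate S hS fun w => Q (w 0)
  rw [sum_congr rfl fun w hw => h_one hw, sum_const, smul_eq_mul, mul_one] at h_nonpos
  rw [sum_congr rfl fun w hw => h_all hw, sum_const, smul_eq_mul, ← h_nonpos, mul_assoc]
    at h_first
  exact (Nat.eq_of_mul_eq_mul_left Fintype.card_pos h_first).symm

end Rotation

section Words

variable {m : ℕ}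

/-- The number of up steps of a word, `true` standing for an up step and `false` for a down step. -/
def numUps (w : Fin m → Bool) : ℕ := #{i | w i = true}

/-- The number of peaks of a nonempty word. -/
def numPeaks (w : Fin (m + 1) → Bool) : ℕ := #{i : Fin m | w i.castSucc = true ∧ w i.succ = false}

/-- The number of peaks of a nonempty word read cyclically, so that its last letter is followed by
its first. -/
def numCyclicPeaks (w : Fin (m + 1) → Bool) : ℕ := #{i | w i = true ∧ w (i + 1) = false}

theorem numUps_rotate (s : Fin (m + 1)) (w : Fin (m + 1) → Bool) :
    numUps (rotate s w) = numUps w :=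
  card_equiv (Equiv.addRight s) fun i => by rw [mem_filter_univ, mem_filter_univ]; rfl

theorem numCyclicPeaks_rotate (s : Fin (m + 1)) (w : Fin (m + 1) → Bool) :
    numCyclicPeaks (rotate s w) = numCyclicPeaks w :=
  card_equiv (Equiv.addRight s) fun i => by
    rw [mem_filter_univ, mem_filter_univ, rotate_apply, rotate_apply, add_right_comm]; rfl

theorem numCyclicPeaks_eq_numPeaks {w : Fin (m + 1) → Bool} (hw : w 0 = true) :
    numCyclicPeaks w = numPeaks w := by
  simp only [numCyclicPeaks, numPeaks, card_filter]
  rw [Fin.sum_univ_castSucc]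
  simp [hw]

theorem numUps_cons (b : Bool) (w : Fin m → Bool) :
    numUps (Fin.cons b w : Fin (m + 1) → Bool) = numUps w + if b then 1 else 0 := by
  simp only [numUps, card_filter, Fin.sum_univ_succ, Fin.cons_zero, Fin.cons_succ, add_comm]

theorem numPeaks_cons_cons (a b : Bool) (w : Fin m → Bool) :
    numPeaks (Fin.cons a (Fin.cons b w : Fin (m + 1) → Bool) : Fin (m + 2) → Bool) =
      numPeaks (Fin.cons b w : Fin (m + 1) → Bool) + if a ∧ b = false then 1 else 0 := by
  simp only [numPeaks, card_filter, Fin.sum_univ_succ (n := m), Fin.castSucc_zero, Fin.cons_zero,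
    Fin.cons_succ, ← Fin.succ_castSucc, add_comm]

theorem numUps_eq_length_iff {w : Fin m → Bool} : numUps w = m ↔ w = fun _ => true := by
  conv_lhs => rhs; rw [← card_fin m]
  rw [numUps, card_filter_eq_iff, funext_iff]
  simp

theorem sum_steps_eq {R : Type*} [Ring R] (x y : R) (w : Fin m → Bool) :
    ∑ i, (if w i then x else y) = numUps w * x + (m - numUps w) * y := by
  have h := card_filter_add_card_filter_not (s := univ) fun i => w i = true
  rw [card_fin] at h
  rw [sum_ite, sum_const, sum_const, numUps]
  push_cast [← h, nsmul_eq_mul]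
  rw [add_sub_cancel_left]

theorem card_up_first_words_nonpos_mul {x y : ℤ} {M k j : ℕ} (hxy : M * x + (m + 1 - M) * y = 1)
    (hj1 : 1 ≤ j) (hj2 : j ≤ M) :
    #{w : Fin (m + 1) → Bool | numUps w = M ∧ w 0 = true ∧ numPeaks w = k ∧
        #{i : Fin (m + 1) | w i = true ∧ psum (fun i => if w i then x else y) i ≤ 0} = j} * M =
      #{w : Fin (m + 1) → Bool | numUps w = M ∧ w 0 = true ∧ numPeaks w = k} := by
  let S : Finset (Fin (m + 1) → Bool) := {w | numUps w = M ∧ numCyclicPeaks w = k}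
  have h_rotate (s) (w) : rotate s w ∈ S ↔ w ∈ S := by
    simp only [S, mem_filter_univ, numUps_rotate, numCyclicPeaks_rotate]
  have h_ups (w) (hw : w ∈ S) : numUps w = M := ((mem_filter_univ _).1 hw).1
  have h_sum (w) (hw : w ∈ S) : ∑ i, (if w i then x else y) = 1 := by
    rw [sum_steps_eq, h_ups w hw, ← hxy, Nat.cast_add_one]
  have h_peaks {w : Fin (m + 1) → Bool} (P : Prop) :
      (numUps w = M ∧ numCyclicPeaks w = k) ∧ w 0 = true ∧ P ↔
        numUps w = M ∧ w 0 = true ∧ numPeaks w = k ∧ P := by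
    rw [and_assoc, and_left_comm (a := numCyclicPeaks w = k)]
    refine and_congr_right fun _ => and_congr_right fun h => ?_
    rw [numCyclicPeaks_eq_numPeaks h]
  have h := card_filter_nonpos_mul_eq_card_filter (fun b => if b then x else y) (· = true)
    h_rotate h_sum h_ups hj1 hj2
  have h_first {w : Fin (m + 1) → Bool} := h_peaks (w := w) True
  simp only [and_true] at h_first
  simpa only [S, filter_filter, h_peaks, h_first] using h

end Words

theorem card_words_succ {m : ℕ} (P : (Fin (m + 1) → Bool) → Prop) [DecidablePred P] :
    #{w | P w} = #{w | P (Fin.cons true w)} + #{w | P (Fin.cons false w)} := by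
  simp only [card_filter]
  rw [← (Fin.consEquiv fun _ => Bool).sum_comp, Fintype.sum_prod_type, Fintype.sum_bool]
  rfl

/-- The number of words of length `m` with `u` up steps which acquire exactly `k` peaks when the
letter `a` is put in front of them. -/
def wordCount (a : Bool) (m u k : ℕ) : ℕ :=
  #{w : Fin m → Bool | numUps w = u ∧ numPeaks (Fin.cons a w : Fin (m + 1) → Bool) = k}

theorem wordCount_false_succ_succ (m u k : ℕ) :
    wordCount false (m + 1) (u + 1) k = wordCount true m u k + wordCount false m (u + 1) k := by
  rw [wordCount, card_words_succ]
  simp [wordCount, numUps_cons, numPeaks_cons_cons]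

theorem wordCount_false_succ_zero (m k : ℕ) :
    wordCount false (m + 1) 0 k = wordCount false m 0 k := by
  rw [wordCount, card_words_succ]
  simp [wordCount, numUps_cons, numPeaks_cons_cons]

theorem wordCount_true_succ_succ (m u k : ℕ) :
    wordCount true (m + 1) (u + 1) (k + 1) =
      wordCount true m u (k + 1) + wordCount false m (u + 1) k := by
  rw [wordCount, card_words_succ]
  simp [wordCount, numUps_cons, numPeaks_cons_cons]

theorem wordCount_true_succ_succ_zero (m u : ℕ) :
    wordCount true (m + 1) (u + 1) 0 = wordCount true m u 0 := by
  rw [wordCount, card_words_succ]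
  simp [wordCount, numUps_cons, numPeaks_cons_cons]

theorem wordCount_true_succ_zero (m k : ℕ) :
    wordCount true (m + 1) 0 (k + 1) = wordCount false m 0 k := by
  rw [wordCount, card_words_succ]
  simp [wordCount, numUps_cons, numPeaks_cons_cons]

theorem wordCount_true_succ_zero_zero (m : ℕ) : wordCount true (m + 1) 0 0 = 0 := by
  rw [wordCount, card_words_succ]
  simp [numUps_cons, numPeaks_cons_cons]

theorem wordCount_self (a : Bool) (m k : ℕ) : wordCount a m m k = if k = 0 then 1 else 0 := by
  have h_peaks : numPeaks (Fin.cons a fun _ => true : Fin (m + 1) → Bool) = 0 := by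
    simp [numPeaks]
  simp only [wordCount, numUps_eq_length_iff, ← filter_filter, filter_eq', mem_univ, if_true,
    filter_singleton, h_peaks, eq_comm (a := 0)]
  split_ifs <;> rfl

theorem wordCount_true_zero (u d : ℕ) : wordCount true (u + (d + 1)) u 0 = 0 := by
  induction u with
  | zero => rw [zero_add, wordCount_true_succ_zero_zero]
  | succ u ih => rw [Nat.succ_add, wordCount_true_succ_succ_zero, ih]

theorem wordCount_true_of_wordCount_false {d : ℕ}
    (h : ∀ u k, wordCount false (u + d) u k = u.choose k * d.choose k) (u k : ℕ) :
    wordCount true (u + (d + 1)) u (k + 1) = (u + 1).choose (k + 1) * d.choose k := by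
  induction u with
  | zero =>
    rw [← add_assoc, wordCount_true_succ_zero, h, Nat.choose_succ_succ, Nat.choose_zero_succ,
      add_zero]
  | succ u ih =>
    rw [← add_assoc, wordCount_true_succ_succ, h, Nat.succ_add_eq_add_succ, ih,
      Nat.choose_succ_succ (u + 1) k]
    ring

theorem wordCount_false (u d k : ℕ) :
    wordCount false (u + d) u k = u.choose k * d.choose k := by
  induction d generalizing u k with
  | zero => cases k <;> simp [wordCount_self]
  | succ d ih =>
    cases u with
    | zero =>
      rw [← add_assoc, wordCount_false_succ_zero, ih]
      cases k <;> simp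
    | succ u =>
      rw [← add_assoc, wordCount_false_succ_succ, ih, Nat.succ_add_eq_add_succ]
      cases k with
      | zero => simp [wordCount_true_zero]
      | succ k =>
        rw [wordCount_true_of_wordCount_false ih, Nat.choose_succ_succ d]
        ring

theorem wordCount_true (u d k : ℕ) :
    wordCount true (u + (d + 1)) u (k + 1) = (u + 1).choose (k + 1) * d.choose k :=
  wordCount_true_of_wordCount_false (fun u k => wordCount_false u d k) u k

theorem card_words_up_first {m u d k : ℕ} (hm : u + (d + 1) = m) :
    #{w : Fin (m + 1) → Bool | numUps w = u + 1 ∧ w 0 = true ∧ numPeaks w = k + 1} =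
      (u + 1).choose (k + 1) * d.choose k := by
  subst hm
  rw [card_words_succ, ← wordCount_true]
  simp [numUps_cons, wordCount]

end ChungFeller

open ChungFeller

/-- Among paths in 𝒫(n,r,1) starting with an up step and having exactly `k` peaks
(an up step immediately followed by a down step), for each `1 ≤ j ≤ rn+1` the
number with exactly `j` up steps starting on or below the x-axis is
`(1/(rn+1))·C(rn+1,k)·C(n-1,k-1)`. -/
theorem generalized_narayana_chung_feller (r n k : ℕ) (hr : 1 ≤ r) (hn : 1 ≤ n)
    (hk1 : 1 ≤ k) (hk2 : k ≤ n) (j : ℕ) (hj1 : 1 ≤ j) (hj2 : j ≤ r*n + 1) :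
    Nat.card {p : Fin ((r+1)*n+1) → ℤ //
      (∀ i, p i = 1 ∨ p i = -(r : ℤ)) ∧
      (univ.filter (fun i => p i = 1)).card = r*n + 1 ∧
      p ⟨0, Nat.succ_pos _⟩ = 1 ∧
      (univ.filter (fun i : Fin ((r+1)*n) =>
        p i.castSucc = 1 ∧ p i.succ = -(r : ℤ))).card = k ∧
      (univ.filter (fun i : Fin ((r+1)*n+1) => p i = 1 ∧ psum p (i : ℕ) ≤ 0)).card = j }
      * (r*n + 1) = Nat.choose (r*n+1) k * Nat.choose (n-1) (k-1) := by
  obtain ⟨d, rfl⟩ : ∃ d, n = d + 1 := Nat.exists_eq_add_of_le' hn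
  obtain ⟨k, rfl⟩ : ∃ l, k = l + 1 := Nat.exists_eq_add_of_le' hk1
  have h_ne : (1 : ℤ) ≠ -r := by omega
  have h_total : ((r * (d + 1) + 1 : ℕ) : ℤ) * 1 +
      (((r + 1) * (d + 1) : ℕ) + 1 - (r * (d + 1) + 1 : ℕ)) * -(r : ℤ) = 1 := by
    push_cast
    ring
  rw [card_two_letter_sequences h_ne, Nat.add_sub_cancel, Nat.add_sub_cancel,
    ← card_words_up_first (m := (r + 1) * (d + 1)) (by ring),
    ← card_up_first_words_nonpos_mul h_total hj1 hj2]
  simp only [numUps, numPeaks, ite_eq_left_iff, ite_eq_right_iff, h_ne, h_ne.symm, imp_false,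
    Bool.not_eq_true, Bool.not_eq_false]
  rfl
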